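/- For every five-element subset {m} ⊆ {1,…,7} and every syndrome value ε ∈ (ℤ/2ℤ)⁶ for which some Pauli word supported in {m} has syndrome ε, there exists a Pauli word g supported in {m} with ε(g) = ε such that c·φ₇(ε)·g ∉ S₇ for every c ∈ {1, −1, i, −i}. (This is the statement f_{S₇}(5) = 0: the Steane code never corrects an arbitrary error affecting five qubits.) -/

import Mathlib

/-!
The operator `Z⊗⁷` commutes with all six generators, hence with every element of the stabilizer, so
a Pauli element anticommuting with `Z⊗⁷` lies outside the stabilizer whatever its phase. Each
five-element set `m` of qubits contains a line `ℓ` of the Fano plane (exactly two of the seven lines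
avoid two given points). The operator `X_ℓ` commutes with all the generators and anticommutes with
`Z⊗⁷`. Therefore, if `P` is supported in `m` and has syndrome `e`, so does `P · X_ℓ`, and exactly one
of `φ₇(e) P` and `φ₇(e) P X_ℓ` anticommutes with `Z⊗⁷`: that one is not corrected.

Commutation is computed on letters: `pauliWord_mul_comm` says that two Pauli words commute up to the
product of the letterwise signs, and `wordSign_flipOn` gives its bilinearity in the case needed.
-/

open Matrix Kronecker
open scoped Classical

noncomputable section

/-- The four single-qubit Pauli matrices `I, X, Y, Z` (indexed `0,1,2,3`). -/
def PauliMat : Fin 4 → Matrix (Fin 2) (Fin 2) ℂ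
  | 0 => 1
  | 1 => !![0, 1; 1, 0]
  | 2 => !![0, -Complex.I; Complex.I, 0]
  | 3 => !![1, 0; 0, -1]

/-- The allowed phases `{1, -1, i, -i}`. -/
def PauliPhase : Set ℂ := {1, -1, Complex.I, -Complex.I}

/-- The `n`-fold Kronecker product `P₁ ⊗ ⋯ ⊗ Pₙ` of single-qubit Pauli matrices
(qubit 1 leftmost). -/
def pauliWord : (n : ℕ) → (Fin n → Fin 4) → Matrix (Fin (2 ^ n)) (Fin (2 ^ n)) ℂ
  | 0, _ => 1
  | n + 1, P =>
      Matrix.reindex (finProdFinEquiv.trans (finCongr (by ring)))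
        (finProdFinEquiv.trans (finCongr (by ring)))
        (Matrix.kroneckerMap (· * ·) (PauliMat (P 0)) (pauliWord n (fun j => P j.succ)))

/-- The `n`-qubit Pauli group `Gⁿ`, as a set of `2ⁿ × 2ⁿ` complex matrices. -/
def PauliGroup (n : ℕ) : Set (Matrix (Fin (2 ^ n)) (Fin (2 ^ n)) ℂ) :=
  {A | ∃ c ∈ PauliPhase, ∃ P : Fin n → Fin 4, A = c • pauliWord n P}

/-- The syndrome of `g` with respect to generators `gs`: the `i`-th component is `0`
if `g` commutes with `gs i` and `1` otherwise (for Pauli elements, "otherwise" means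
anticommutes). -/
def syndrome {n r : ℕ} (gs : Fin r → Matrix (Fin (2 ^ n)) (Fin (2 ^ n)) ℂ)
    (g : Matrix (Fin (2 ^ n)) (Fin (2 ^ n)) ℂ) : Fin r → ZMod 2 :=
  fun i => if g * gs i = gs i * g then 0 else 1


/-- The six generators of the Steane code stabilizer:
g₁ = IIIXXXX, g₂ = IXXIIXX, g₃ = XIXIXIX, g₄ = IIIZZZZ, g₅ = IZZIIZZ, g₆ = ZIZIZIZ. -/
def steaneGens : Fin 6 → Matrix (Fin (2 ^ 7)) (Fin (2 ^ 7)) ℂ :=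
  ![pauliWord 7 ![0, 0, 0, 1, 1, 1, 1], pauliWord 7 ![0, 1, 1, 0, 0, 1, 1],
    pauliWord 7 ![1, 0, 1, 0, 1, 0, 1], pauliWord 7 ![0, 0, 0, 3, 3, 3, 3],
    pauliWord 7 ![0, 3, 3, 0, 0, 3, 3], pauliWord 7 ![3, 0, 3, 0, 3, 0, 3]]

/-- The letters (0 = I, 1 = X, 2 = Y, 3 = Z) of the Pauli word assigned by the Steane
error-correcting function to a syndrome ε: with a = 4ε₁+2ε₂+ε₃ and b = 4ε₄+2ε₅+ε₆,
qubit j gets Y if j = a = b ≠ 0, Z if j = a ≠ b, X if j = b ≠ a, and I otherwise. -/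
def phi7Word (e : Fin 6 → ZMod 2) : Fin 7 → Fin 4 := fun j =>
  let a : ℕ := 4 * (e 0).val + 2 * (e 1).val + (e 2).val
  let b : ℕ := 4 * (e 3).val + 2 * (e 4).val + (e 5).val
  if j.val + 1 = a ∧ a = b then 2
  else if j.val + 1 = a then 3
  else if j.val + 1 = b then 1
  else 0

/-- The error-correcting function of the Steane code. -/
def phi7 (e : Fin 6 → ZMod 2) : Matrix (Fin (2 ^ 7)) (Fin (2 ^ 7)) ℂ :=
  pauliWord 7 (phi7Word e)

/-- The sign `s` with `PauliMat a * PauliMat b = s • (PauliMat b * PauliMat a)`. -/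
def letterSign (a b : Fin 4) : ℤ := if a = 0 ∨ b = 0 ∨ a = b then 1 else -1

/-- The commutation sign of two Pauli words. -/
def wordSign {n : ℕ} (P Q : Fin n → Fin 4) : ℤ := ∏ i, letterSign (P i) (Q i)

/-- The letter of `PauliMat a * X`, up to phase. -/
def flipX (a : Fin 4) : Fin 4 := ![1, 0, 3, 2] a

/-- The word of `P · X_ℓ`, up to phase, where `X_ℓ` acts by `X` on the qubits of `l`. -/
def flipOn (l : Finset (Fin 7)) (P : Fin 7 → Fin 4) : Fin 7 → Fin 4 :=
  fun i => if i ∈ l then flipX (P i) else P i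

/-- The seven lines of the Fano plane, in the zero-based labelling for which the points `a - 1`,
`b - 1`, `c - 1` are collinear when the binary expansions of `a`, `b`, `c` have bitwise sum zero. -/
def fanoLine : Fin 7 → Finset (Fin 7) :=
  ![{0, 1, 2}, {0, 3, 4}, {0, 5, 6}, {1, 3, 5}, {1, 4, 6}, {2, 3, 6}, {2, 4, 5}]

/-- The letters of the six Steane generators. -/
def steaneWord : Fin 6 → Fin 7 → Fin 4 :=
  ![![0, 0, 0, 1, 1, 1, 1], ![0, 1, 1, 0, 0, 1, 1], ![1, 0, 1, 0, 1, 0, 1],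
    ![0, 0, 0, 3, 3, 3, 3], ![0, 3, 3, 0, 0, 3, 3], ![3, 0, 3, 0, 3, 0, 3]]

/-- The word `ZZZZZZZ`. -/
def allZ : Fin 7 → Fin 4 := fun _ => 3

lemma steaneGens_eq (i : Fin 6) : steaneGens i = pauliWord 7 (steaneWord i) := by
  fin_cases i <;> rfl

lemma pauliMat_mul_comm (a b : Fin 4) :
    PauliMat a * PauliMat b = (letterSign a b : ℂ) • (PauliMat b * PauliMat a) := by
  fin_cases a <;> fin_cases b <;> simp [PauliMat, letterSign]

lemma pauliMat_mul_self (a : Fin 4) : PauliMat a * PauliMat a = 1 := by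
  fin_cases a <;> simp [PauliMat, Matrix.one_fin_two]

lemma pauliWord_mul_succ (n : ℕ) (P Q : Fin (n + 1) → Fin 4) :
    pauliWord (n + 1) P * pauliWord (n + 1) Q =
      Matrix.reindex (finProdFinEquiv.trans (finCongr (by ring)))
        (finProdFinEquiv.trans (finCongr (by ring)))
        (Matrix.kroneckerMap (· * ·) (PauliMat (P 0) * PauliMat (Q 0))
          (pauliWord n (fun j => P j.succ) * pauliWord n (fun j => Q j.succ))) := by
  simp only [pauliWord, Matrix.reindex_apply, Matrix.submatrix_mul_equiv]
  rw [Matrix.mul_kronecker_mul]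

lemma pauliWord_mul_comm (n : ℕ) (P Q : Fin n → Fin 4) :
    pauliWord n P * pauliWord n Q = (wordSign P Q : ℂ) • (pauliWord n Q * pauliWord n P) := by
  induction n with
  | zero => simp [pauliWord, wordSign]
  | succ n ih =>
    rw [pauliWord_mul_succ, pauliWord_mul_succ, ih, pauliMat_mul_comm, Matrix.smul_kronecker,
      Matrix.kronecker_smul, smul_smul]
    simp only [wordSign, Fin.prod_univ_succ, Int.cast_mul]
    rfl

lemma pauliWord_mul_self (n : ℕ) (P : Fin n → Fin 4) : pauliWord n P * pauliWord n P = 1 := by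
  induction n with
  | zero => simp [pauliWord]
  | succ n ih =>
    rw [pauliWord_mul_succ, ih, pauliMat_mul_self, Matrix.one_kronecker_one]
    exact Matrix.submatrix_one_equiv _

lemma pauliWord_mul_ne_zero (n : ℕ) (P Q : Fin n → Fin 4) :
    pauliWord n P * pauliWord n Q ≠ 0 := by
  intro h
  have h1 : pauliWord n P * (pauliWord n P * pauliWord n Q) * pauliWord n Q = 1 := by
    rw [← mul_assoc, pauliWord_mul_self, one_mul, pauliWord_mul_self]
  rw [h] at h1
  simp at h1

lemma wordSign_eq {n : ℕ} (P Q : Fin n → Fin 4) : wordSign P Q = 1 ∨ wordSign P Q = -1 := by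
  rw [← Int.isUnit_iff, wordSign]
  refine Finset.prod_induction _ IsUnit (fun _ _ => IsUnit.mul) isUnit_one fun i _ => ?_
  rw [Int.isUnit_iff, letterSign]
  split_ifs <;> simp

lemma matrix_eq_zero_of_neg_eq {n : ℕ} {A : Matrix (Fin n) (Fin n) ℂ} (h : -A = A) : A = 0 := by
  ext i j
  exact neg_eq_self.1 (congrFun (congrFun h i) j)

lemma pauliWord_commute_iff (n : ℕ) (P Q : Fin n → Fin 4) :
    pauliWord n P * pauliWord n Q = pauliWord n Q * pauliWord n P ↔ wordSign P Q = 1 := by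
  rw [pauliWord_mul_comm]
  rcases wordSign_eq P Q with h | h
  · simp [h]
  · simp only [h, Int.cast_neg, Int.cast_one, neg_smul, one_smul, (by decide : (-1 : ℤ) ≠ 1),
      iff_false]
    exact fun h' => pauliWord_mul_ne_zero n Q P (matrix_eq_zero_of_neg_eq h')

lemma letterSign_flipX (a b : Fin 4) :
    letterSign (flipX a) b = letterSign a b * letterSign 1 b := by
  revert a b; decide

lemma wordSign_flipOn (l : Finset (Fin 7)) (P Q : Fin 7 → Fin 4) :
    wordSign (flipOn l P) Q = wordSign P Q * wordSign (flipOn l fun _ => 0) Q := by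
  simp only [wordSign, ← Finset.prod_mul_distrib]
  refine Finset.prod_congr rfl fun i _ => ?_
  by_cases h : i ∈ l
  · simp only [flipOn, h, if_true]
    rw [letterSign_flipX, letterSign_flipX 0]
    simp [letterSign]
  · simp [flipOn, h, letterSign]

lemma wordSign_line_gen (k : Fin 7) (i : Fin 6) :
    wordSign (flipOn (fanoLine k) fun _ => 0) (steaneWord i) = 1 := by
  revert k i; decide

lemma wordSign_line_allZ (k : Fin 7) :
    wordSign (flipOn (fanoLine k) fun _ => 0) allZ = -1 := by
  revert k; decide

set_option maxRecDepth 10000 in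
lemma exists_fanoLine_subset (m : Finset (Fin 7)) (hm : m.card = 5) : ∃ k, fanoLine k ⊆ m := by
  revert m; decide

lemma syndrome_flipOn (k : Fin 7) (P : Fin 7 → Fin 4) :
    syndrome steaneGens (pauliWord 7 (flipOn (fanoLine k) P)) =
      syndrome steaneGens (pauliWord 7 P) := by
  funext i
  simp only [syndrome, steaneGens_eq, pauliWord_commute_iff]
  rw [wordSign_flipOn, wordSign_line_gen, mul_one]

lemma commute_allZ_of_mem {A : Matrix (Fin (2 ^ 7)) (Fin (2 ^ 7)) ℂ}
    (hA : A ∈ Submonoid.closure (Set.range steaneGens)) : Commute A (pauliWord 7 allZ) := by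
  induction hA using Submonoid.closure_induction with
  | mem x hx =>
    obtain ⟨i, rfl⟩ := hx
    rw [steaneGens_eq]
    refine (pauliWord_commute_iff 7 _ _).2 ?_
    revert i; decide
  | one => exact Commute.one_left _
  | mul x y _ _ hx hy => exact hx.mul_left hy

/-- A product of two Pauli words that anticommutes with `Z⊗⁷` is outside the stabilizer, for every
choice of phase. -/
lemma not_mem_of_sign (P Q : Fin 7 → Fin 4) (h : wordSign P allZ * wordSign Q allZ = -1)
    (c : ℂ) (hc : c ∈ PauliPhase) :
    c • (pauliWord 7 P * pauliWord 7 Q) ∉ Submonoid.closure (Set.range steaneGens) := by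
  intro hmem
  have hc0 : c ≠ 0 := by
    rcases hc with rfl | rfl | rfl | rfl <;> simp
  have hcomm := (commute_allZ_of_mem hmem).eq
  rw [smul_mul_assoc, mul_smul_comm] at hcomm
  have h1 := smul_right_injective _ hc0 hcomm
  have h2 : pauliWord 7 P * pauliWord 7 Q * pauliWord 7 allZ =
      -(pauliWord 7 allZ * (pauliWord 7 P * pauliWord 7 Q)) := by
    rw [mul_assoc, pauliWord_mul_comm 7 Q, mul_smul_comm, ← mul_assoc, pauliWord_mul_comm 7 P allZ,
      smul_mul_assoc, smul_smul, mul_assoc, ← Int.cast_mul, mul_comm, h]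
    simp
  rw [h2] at h1
  have h3 : pauliWord 7 allZ * (pauliWord 7 allZ * (pauliWord 7 P * pauliWord 7 Q)) = 0 := by
    rw [matrix_eq_zero_of_neg_eq h1, mul_zero]
  rw [← mul_assoc, pauliWord_mul_self, one_mul] at h3
  exact pauliWord_mul_ne_zero 7 P Q h3

/-- f_{S₇}(5) = 0: for every five-element subset {m} of the qubits and
every syndrome ε attained by some Pauli word supported in {m}, there is a Pauli word
supported in {m} with syndrome ε that is not corrected by φ₇ (up to any phase). -/
theorem steane_five_qubit_never_corrected
    (m : Finset (Fin 7)) (hm : m.card = 5) (e : Fin 6 → ZMod 2)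
    (he : ∃ P : Fin 7 → Fin 4, (∀ i ∉ m, P i = 0) ∧ syndrome steaneGens (pauliWord 7 P) = e) :
    ∃ P : Fin 7 → Fin 4, (∀ i ∉ m, P i = 0) ∧ syndrome steaneGens (pauliWord 7 P) = e ∧
      ∀ c ∈ PauliPhase,
        c • (phi7 e * pauliWord 7 P) ∉ Submonoid.closure (Set.range steaneGens) := by
  obtain ⟨P, hP, rfl⟩ := he
  obtain ⟨k, hk⟩ := exists_fanoLine_subset m hm
  set e := syndrome steaneGens (pauliWord 7 P) with he
  have hprod : wordSign (phi7Word e) allZ * wordSign P allZ = -1 ∨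
      wordSign (phi7Word e) allZ * wordSign P allZ = 1 := by
    rcases wordSign_eq (phi7Word e) allZ with h | h <;>
      rcases wordSign_eq P allZ with h' | h' <;> simp [h, h']
  rcases hprod with h | h
  · exact ⟨P, hP, he.symm, not_mem_of_sign _ _ h⟩
  · refine ⟨flipOn (fanoLine k) P, fun i hi => ?_, syndrome_flipOn k P, not_mem_of_sign _ _ ?_⟩
    · have : i ∉ fanoLine k := fun h => hi (hk h)
      simp [flipOn, this, hP i hi]
    · rw [wordSign_flipOn, wordSign_line_allZ, ← mul_assoc, h, one_mul]

end
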